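/- arXiv:1711.01975 — 5 statements merged into one kernel-verified Lean document; each statement's English description precedes it below -/
import Mathlib

section
/- Let k ≥ 2 and let F be a finite field of characteristic 2. There exists a constant C depending only on k such that: for every x ∈ F^k whose coordinates are pairwise distinct and nonzero and such that no (k−2)-element subset of the set of coordinates of x sums to 0, the number of vectors a ∈ F^k for which either V(x,a) = 0 for some vertex operator V ∈ VO, or V(x,a) = V′(x,a) for two distinct vertex operators V, V′ ∈ VO, is at most C·|F|^{k−1}. (For k ∈ {3,4} the hypothesis on (k−2)-subsets holds automatically.) -/
open Finset

section LinOps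

variable (F : Type*) [Field F] (k : ℕ)

/-- Inclusion of the first block: `x ↦ (x, 0)`. -/
def inlMap : (Fin k → F) →ₗ[F] ((Fin k ⊕ Fin k) → F) where
  toFun x := Sum.elim x 0
  map_add' x y := by funext s; cases s <;> simp
  map_smul' c x := by funext s; cases s <;> simp

/-- Inclusion of the second block: `a ↦ (0, a)`. -/
def inrMap : (Fin k → F) →ₗ[F] ((Fin k ⊕ Fin k) → F) where
  toFun a := Sum.elim 0 a
  map_add' x y := by funext s; cases s <;> simp
  map_smul' c x := by funext s; cases s <;> simp

variable {F k}

/-- For `T : F^{2k} → M`, the map `T₁ : F^k → M`, `x ↦ T(x,0)`. -/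
def leftPart {M : Type*} [AddCommMonoid M] [Module F M]
    (T : ((Fin k ⊕ Fin k) → F) →ₗ[F] M) : (Fin k → F) →ₗ[F] M :=
  T ∘ₗ inlMap F k

/-- For `T : F^{2k} → M`, the map `T₂ : F^k → M`, `a ↦ T(0,a)`. -/
def rightPart {M : Type*} [AddCommMonoid M] [Module F M]
    (T : ((Fin k ⊕ Fin k) → F) →ₗ[F] M) : (Fin k → F) →ₗ[F] M :=
  T ∘ₗ inrMap F k

variable (F k)

/-- The operator `C : F^k → F^{2k}` given by the block matrix `[I; J + I]`. -/
def Cop : (Fin k → F) →ₗ[F] ((Fin k ⊕ Fin k) → F) where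
  toFun x := Sum.elim x fun i => x i + ∑ j, x j
  map_add' x y := by
    funext s; cases s <;> simp [Finset.sum_add_distrib] <;> ring
  map_smul' c x := by
    funext s; cases s <;> simp [Finset.mul_sum, mul_add]

variable {k}

/-- The operator `E_I : F^{2k} → F^k` given by the block matrix `[X_{[k]\I} X_I]`. -/
def Eop (I : Finset (Fin k)) : ((Fin k ⊕ Fin k) → F) →ₗ[F] (Fin k → F) where
  toFun y i := if i ∈ I then y (Sum.inr i) else y (Sum.inl i)
  map_add' x y := by funext i; by_cases h : i ∈ I <;> simp [h]
  map_smul' c x := by funext i; by_cases h : i ∈ I <;> simp [h]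

variable {F}

/-- The map `Fin (k-1) → Fin k` skipping `i`. -/
def delIdx {k : ℕ} (i : Fin k) (j : Fin (k - 1)) : Fin k :=
  if (j : ℕ) < (i : ℕ) then ⟨j, by have := j.isLt; omega⟩
  else ⟨(j : ℕ) + 1, by have := j.isLt; omega⟩

variable (F)

/-- The projection `P_i : F^k → F^{k-1}` deleting the `i`-th coordinate. -/
def Pop (i : Fin k) : (Fin k → F) →ₗ[F] (Fin (k - 1) → F) :=
  LinearMap.funLeft F F (delIdx i)

variable (k)

/-- The vertex operators `VO = VO₁ ∪ VO₂`. -/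
def VO : Set (((Fin k ⊕ Fin k) → F) →ₗ[F] F) :=
  {V | (∃ i : Fin k, V = LinearMap.proj i ∘ₗ Eop F (∅ : Finset (Fin k)) ∨
          V = LinearMap.proj i ∘ₗ Eop F (Finset.univ : Finset (Fin k))) ∨
       (∃ (i : Fin k) (I : Finset (Fin k)), I.Nonempty ∧ Even I.card ∧
          V = LinearMap.proj i ∘ₗ Eop F (Finset.univ : Finset (Fin k)) ∘ₗ Cop F k ∘ₗ Eop F I)}

/-- The facet operators `FO₁ = {P_i E_∅}`. -/
def FO1 : Set (((Fin k ⊕ Fin k) → F) →ₗ[F] (Fin (k - 1) → F)) :=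
  {T | ∃ i : Fin k, T = Pop F i ∘ₗ Eop F (∅ : Finset (Fin k))}

/-- The facet operators `FO₂ = {P_i E_J C E_I : |J| even, I ≠ ∅, |I| even}`. -/
def FO2 : Set (((Fin k ⊕ Fin k) → F) →ₗ[F] (Fin (k - 1) → F)) :=
  {T | ∃ (i : Fin k) (J I : Finset (Fin k)), Even J.card ∧ I.Nonempty ∧ Even I.card ∧
        T = Pop F i ∘ₗ Eop F J ∘ₗ Cop F k ∘ₗ Eop F I}

/-- The facet operators `FO = FO₁ ∪ FO₂`. -/
def FO : Set (((Fin k ⊕ Fin k) → F) →ₗ[F] (Fin (k - 1) → F)) :=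
  FO1 F k ∪ FO2 F k

/-- The edge operators `EO = EO₁ ∪ EO₂`. -/
def EO : Set (((Fin k ⊕ Fin k) → F) →ₗ[F] (Fin k → F)) :=
  {T | (∃ I : Finset (Fin k), Odd I.card ∧ T = Eop F I) ∨
       (∃ J I : Finset (Fin k), J.Nonempty ∧ I.Nonempty ∧ Even I.card ∧
          T = Eop F J ∘ₗ Cop F k ∘ₗ Eop F I)}

end LinOps

/-!
In characteristic `2` the doubled coordinate in `T_i E_{[k]} C E_I` cancels, so every vertex
operator has the form `(x, a) ↦ ∑ j ∈ A, a j + ∑ j ∈ X, x j`. For fixed `x` this is an affine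
function of `a`, and two distinct affine functions on `F^k` agree in at most `|F|^(k-1)` points.
It therefore suffices that distinct vertex operators remain distinct, and nonzero, as functions of
`a`. This can only fail for operators with the same `A`, and there the hypotheses on `x` separate
the sums `∑ j ∈ X, x j`: `X` is a singleton if `A` is empty; otherwise it is `Aᶜ` with one point
deleted or, when `A` is a singleton, possibly empty.
-/

section AffineCoincidence

variable {K V W P Q : Type*} [DivisionRing K] [Finite K] [AddCommGroup V] [Module K V]
  [FiniteDimensional K V] [AddTorsor V P] [AddCommGroup W] [Module K W] [AddTorsor W Q]

lemma ncard_setOf_affineMap_eq_le {f g : P →ᵃ[K] Q} (hfg : f ≠ g) :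
    {p | f p = g p}.ncard ≤ Nat.card K ^ (Module.finrank K V - 1) := by
  obtain hempty | ⟨p₀, hp₀⟩ := {p | f p = g p}.eq_empty_or_nonempty
  · simp [hempty]
  have hlinear : LinearMap.eqLocus f.linear g.linear ≠ ⊤ := fun h =>
    hfg (AffineMap.ext_linear (LinearMap.eqLocus_eq_top.1 h) hp₀)
  have htranslate :
      {p | f p = g p} ⊆ (· +ᵥ p₀) '' (LinearMap.eqLocus f.linear g.linear : Set V) := by
    intro p hp
    refine ⟨p -ᵥ p₀, ?_, vsub_vadd p p₀⟩
    rw [SetLike.mem_coe, LinearMap.mem_eqLocus, f.linearMap_vsub, g.linearMap_vsub, hp, hp₀]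
  have : Finite V := Module.finite_of_finite K
  calc {p | f p = g p}.ncard
      ≤ (LinearMap.eqLocus f.linear g.linear : Set V).ncard :=
        (Set.ncard_le_ncard htranslate).trans (Set.ncard_image_le (Set.toFinite _))
    _ = Nat.card K ^ Module.finrank K (LinearMap.eqLocus f.linear g.linear) :=
        Module.natCard_eq_pow_finrank
    _ ≤ Nat.card K ^ (Module.finrank K V - 1) :=
        Nat.pow_le_pow_right Nat.card_pos (Nat.le_sub_one_of_lt (Submodule.finrank_lt hlinear))

lemma ncard_setOf_exists_affineMap_ne_and_eq_le {ι : Type*} [Fintype ι] (f : ι → P →ᵃ[K] Q) :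
    {p | ∃ i j, f i ≠ f j ∧ f i p = f j p}.ncard ≤
      Fintype.card ι ^ 2 * Nat.card K ^ (Module.finrank K V - 1) := by
  classical
  have hunion : {p | ∃ i j, f i ≠ f j ∧ f i p = f j p} =
      ⋃ q ∈ ({q | f q.1 ≠ f q.2} : Finset (ι × ι)), {p | f q.1 p = f q.2 p} := by
    ext p
    simp
  calc {p | ∃ i j, f i ≠ f j ∧ f i p = f j p}.ncard
      ≤ ∑ q ∈ ({q | f q.1 ≠ f q.2} : Finset (ι × ι)), {p | f q.1 p = f q.2 p}.ncard :=
        hunion ▸ set_ncard_biUnion_le _ _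
    _ ≤ #({q | f q.1 ≠ f q.2} : Finset (ι × ι)) * Nat.card K ^ (Module.finrank K V - 1) :=
        sum_le_card_nsmul _ _ _ fun q hq => ncard_setOf_affineMap_eq_le (mem_filter.1 hq).2
    _ ≤ Fintype.card ι ^ 2 * Nat.card K ^ (Module.finrank K V - 1) := by
        rw [sq, ← Fintype.card_prod]
        exact Nat.mul_le_mul_right _ (card_le_univ _)

end AffineCoincidence

section BlockSum

variable {F : Type*} [Field F] {k : ℕ}

/-- The affine function `a ↦ T(x, a)` obtained from an operator `T` on `F^{2k}` by fixing `x`. -/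
def affineSlice {M : Type*} [AddCommGroup M] [Module F M] (x : Fin k → F)
    (T : ((Fin k ⊕ Fin k) → F) →ₗ[F] M) : (Fin k → F) →ᵃ[F] M :=
  (rightPart T).toAffineMap + AffineMap.const F (Fin k → F) (leftPart T x)

lemma affineSlice_apply {M : Type*} [AddCommGroup M] [Module F M] (x : Fin k → F)
    (T : ((Fin k ⊕ Fin k) → F) →ₗ[F] M) (a : Fin k → F) : affineSlice x T a = T (Sum.elim x a) := by
  have hsplit : Sum.elim x a = inrMap F k a + inlMap F k x := by
    ext (j | j) <;> simp [inlMap, inrMap]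
  simp [hsplit, affineSlice, leftPart, rightPart]

variable (F) in
/-- The functional `(x, a) ↦ ∑ j ∈ A, a j + ∑ j ∈ X, x j` on `F^{2k}`. In characteristic `2` all
vertex operators are of this form. -/
def blockSum (A X : Finset (Fin k)) : ((Fin k ⊕ Fin k) → F) →ₗ[F] F :=
  ∑ j ∈ A, LinearMap.proj (Sum.inr j) + ∑ j ∈ X, LinearMap.proj (Sum.inl j)

lemma blockSum_apply (A X : Finset (Fin k)) (y : (Fin k ⊕ Fin k) → F) :
    blockSum F A X y = ∑ j ∈ A, y (Sum.inr j) + ∑ j ∈ X, y (Sum.inl j) := by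
  simp [blockSum]

lemma affineSlice_blockSum_eq_iff {x : Fin k → F} {A B X Y : Finset (Fin k)} :
    affineSlice x (blockSum F A X) = affineSlice x (blockSum F B Y) ↔
      A = B ∧ ∑ j ∈ X, x j = ∑ j ∈ Y, x j := by
  simp only [AffineMap.ext_iff, affineSlice_apply, blockSum_apply, Sum.elim_inl, Sum.elim_inr]
  refine ⟨fun h => ?_, fun ⟨hAB, hXY⟩ a => by rw [hAB, hXY]⟩
  have hconst : ∑ j ∈ X, x j = ∑ j ∈ Y, x j := by simpa using h 0
  refine ⟨Finset.ext fun i => ?_, hconst⟩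
  have hcoeff : (if i ∈ A then (1 : F) else 0) = if i ∈ B then 1 else 0 := by
    simpa [hconst, sum_pi_single] using h (Pi.single i 1)
  by_cases hA : i ∈ A <;> by_cases hB : i ∈ B <;> simp_all

end BlockSum

section VertexPairs

lemma eq_of_sum_compl_insert_eq {ι M : Type*} [Fintype ι] [DecidableEq ι] [AddCancelCommMonoid M]
    {A : Finset ι} {i j : ι} {x : ι → M} (hi : i ∉ A) (hj : j ∉ A) (hinj : Function.Injective x)
    (h : ∑ l ∈ (insert i A)ᶜ, x l = ∑ l ∈ (insert j A)ᶜ, x l) : i = j := by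
  have hadd {l : ι} (hl : l ∉ A) : x l + ∑ m ∈ (insert l A)ᶜ, x m = ∑ m ∈ Aᶜ, x m := by
    rw [compl_insert, add_sum_erase _ _ (mem_compl.2 hl)]
  have hsum : x i + ∑ l ∈ (insert i A)ᶜ, x l = x j + ∑ l ∈ (insert i A)ᶜ, x l := by
    rw [hadd hi, h, hadd hj]
  exact hinj (add_right_cancel hsum)

/-- The pairs `(A, X)` for which `(x, a) ↦ ∑ j ∈ A, a j + ∑ j ∈ X, x j` is a vertex operator in
characteristic `2`. In `mixed`, the operator is `T_i E_{[k]} C E_I` with `A = I \ {i}`, whether or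
not `i ∈ I`. -/
inductive IsVertexPair {ι : Type*} [Fintype ι] [DecidableEq ι] : Finset ι → Finset ι → Prop
  | left (i : ι) : IsVertexPair ∅ {i}
  | right (i : ι) : IsVertexPair {i} ∅
  | mixed {A : Finset ι} (i : ι) (hA : A.Nonempty) (hi : i ∉ A) : IsVertexPair A (insert i A)ᶜ

namespace IsVertexPair

variable {ι M : Type*} [Fintype ι] [DecidableEq ι] {A X Y : Finset ι} {x : ι → M}

lemma sum_ne_zero_of_eq_empty [AddCommMonoid M] (h : IsVertexPair A X) (hA : A = ∅)
    (hx : ∀ i, x i ≠ 0) : ∑ j ∈ X, x j ≠ 0 := by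
  cases h with
  | left i => simpa using hx i
  | right i => exact absurd hA (singleton_ne_empty i)
  | mixed _ hne _ => exact absurd hA hne.ne_empty

lemma eq_of_sum_eq [AddCancelCommMonoid M] (hX : IsVertexPair A X) (hY : IsVertexPair A Y)
    (hinj : Function.Injective x)
    (hsum : ∀ s : Finset ι, #s = Fintype.card ι - 2 → ∑ i ∈ s, x i ≠ 0)
    (hXY : ∑ j ∈ X, x j = ∑ j ∈ Y, x j) : X = Y := by
  have hpair {i j : ι} (hij : i ∉ ({j} : Finset ι)) : ∑ l ∈ (insert i {j} : Finset ι)ᶜ, x l ≠ 0 :=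
    hsum _ (by rw [card_compl, card_pair (by simpa using hij)])
  generalize hAB : A = B at hY
  cases hX with
  | left i =>
    cases hY with
    | left j => exact congrArg _ (hinj (by simpa using hXY))
    | right j => exact absurd hAB.symm (singleton_ne_empty j)
    | mixed _ hB _ => exact absurd hAB.symm hB.ne_empty
  | right i =>
    cases hY with
    | left j => exact absurd hAB (singleton_ne_empty i)
    | right j => rfl
    | mixed j _ hj =>
      subst hAB
      exact absurd hXY.symm (hpair hj)
  | mixed i hA hi =>
    cases hY with
    | left j => exact absurd hAB hA.ne_empty
    | right j =>
      subst hAB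
      exact absurd hXY (hpair hi)
    | mixed j _ hj =>
      subst hAB
      rw [eq_of_sum_compl_insert_eq hi hj hinj hXY]

end IsVertexPair

end VertexPairs

section CharTwo

lemma add_sum_univ_eq_sum_compl_singleton {R ι : Type*} [Semiring R] [CharP R 2] [Fintype ι]
    [DecidableEq ι] (z : ι → R) (i : ι) : z i + ∑ j, z j = ∑ j ∈ {i}ᶜ, z j := by
  rw [Fintype.sum_eq_add_sum_compl i, CharTwo.add_cancel_left]

variable {F : Type*} [Field F] {k : ℕ}

lemma sum_Eop_apply (S I : Finset (Fin k)) (y : (Fin k ⊕ Fin k) → F) :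
    ∑ j ∈ S, Eop F I y j = blockSum F (S ∩ I) (S \ I) y := by
  simp [Eop, blockSum_apply, sum_ite, filter_mem_eq_inter, filter_notMem_eq_sdiff]

lemma proj_comp_Eop_Cop_Eop_eq_blockSum [CharP F 2] (i : Fin k) (I : Finset (Fin k)) :
    LinearMap.proj i ∘ₗ Eop F univ ∘ₗ Cop F k ∘ₗ Eop F I =
      blockSum F (I.erase i) (insert i (I.erase i))ᶜ := by
  have hinter : {i}ᶜ ∩ I = I.erase i := by ext j; simp
  have hsdiff : {i}ᶜ \ I = (insert i (I.erase i))ᶜ := by ext j; simp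
  refine LinearMap.ext fun y => ?_
  calc (LinearMap.proj i ∘ₗ Eop F univ ∘ₗ Cop F k ∘ₗ Eop F I) y
      = Eop F I y i + ∑ j, Eop F I y j := by simp [Eop, Cop]
    _ = ∑ j ∈ {i}ᶜ, Eop F I y j := add_sum_univ_eq_sum_compl_singleton _ i
    _ = blockSum F (I.erase i) (insert i (I.erase i))ᶜ y := by rw [sum_Eop_apply, hinter, hsdiff]

lemma exists_isVertexPair_eq_blockSum [CharP F 2] {V : ((Fin k ⊕ Fin k) → F) →ₗ[F] F}
    (hV : V ∈ VO F k) : ∃ A X, IsVertexPair A X ∧ V = blockSum F A X := by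
  rcases hV with ⟨i, rfl | rfl⟩ | ⟨i, I, hne, heven, rfl⟩
  · exact ⟨∅, {i}, .left i, LinearMap.ext fun y => by simp [Eop, blockSum_apply]⟩
  · exact ⟨{i}, ∅, .right i, LinearMap.ext fun y => by simp [Eop, blockSum_apply]⟩
  · have hcard : 1 < #I := by grind
    have herase : (I.erase i).Nonempty := (one_lt_card_iff_nontrivial.1 hcard).erase_nonempty
    exact ⟨_, _, .mixed i herase (notMem_erase i I), proj_comp_Eop_Cop_Eop_eq_blockSum i I⟩

end CharTwo

/-- for `x ∈ F^k` with pairwise distinct nonzero coordinates, no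
`(k-2)`-subset of whose coordinates sums to `0`, the number of `a ∈ F^k` making
some vertex operator vanish, or two distinct vertex operators agree, on `(x,a)`
is at most `C·|F|^{k-1}`. -/
theorem stmt_4 (k : ℕ) (hk : 2 ≤ k) :
    ∃ C : ℝ, 0 < C ∧
      ∀ (F : Type) [Field F] [Fintype F], ringChar F = 2 →
        ∀ x : Fin k → F, Function.Injective x → (∀ i, x i ≠ 0) →
          (∀ s : Finset (Fin k), s.card = k - 2 → ∑ i ∈ s, x i ≠ 0) →
          (Set.ncard {a : Fin k → F |
              (∃ V ∈ VO F k, V (Sum.elim x a) = 0) ∨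
              (∃ V ∈ VO F k, ∃ V' ∈ VO F k, V ≠ V' ∧
                 V (Sum.elim x a) = V' (Sum.elim x a))} : ℝ) ≤
            C * (Fintype.card F : ℝ) ^ (k - 1) := by
  refine ⟨(Fintype.card (Finset (Fin k) × Finset (Fin k)) : ℝ) ^ 2,
    by exact_mod_cast pow_pos Fintype.card_pos 2, fun F _ _ hF x hinj hx hsum => ?_⟩
  have : CharP F 2 := ringChar.of_eq hF
  have hbound := ncard_setOf_exists_affineMap_ne_and_eq_le
    fun q : Finset (Fin k) × Finset (Fin k) => affineSlice x (blockSum F q.1 q.2)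
  rw [Nat.card_eq_fintype_card, Module.finrank_fin_fun] at hbound
  refine le_trans (Nat.cast_le.2 (Set.ncard_le_ncard ?_)) (mod_cast hbound)
  rintro a (⟨V, hV, hzero⟩ | ⟨V, hV, V', hV', hne, heq⟩)
  · obtain ⟨A, X, hAX, rfl⟩ := exists_isVertexPair_eq_blockSum hV
    refine ⟨(A, X), (∅, ∅), fun h => ?_, by simpa [affineSlice_apply, blockSum_apply] using hzero⟩
    obtain ⟨hA, hX⟩ := affineSlice_blockSum_eq_iff.1 h
    exact hAX.sum_ne_zero_of_eq_empty hA hx (hX.trans sum_empty)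
  · obtain ⟨A, X, hAX, rfl⟩ := exists_isVertexPair_eq_blockSum hV
    obtain ⟨B, Y, hBY, rfl⟩ := exists_isVertexPair_eq_blockSum hV'
    refine ⟨(A, X), (B, Y), fun h => hne ?_, by simpa only [affineSlice_apply] using heq⟩
    obtain ⟨rfl, hXY⟩ := affineSlice_blockSum_eq_iff.1 h
    rw [hAX.eq_of_sum_eq hBY hinj (by simpa using hsum) hXY]
end

section
/- Let k ≥ 2 and let F be a finite field of characteristic 2. For every facet operator F ∈ FO the following hold: (1) if F ∈ FO_2 then there exist distinct i, j ∈ [k] such that the standard basis vectors e_i and e_j lie in the kernel of F_1; (2) if F ∈ FO_2 then rank F_2 ≥ 1; (3) for every f ∈ F^{k−1}, the set {a ∈ F^k : there exists s ∈ F^k with F_1 s + F_2 a = f} is an affine subspace of F^k of dimension rank F_1 + 1. -/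
open Finset

/- An operator of `FO₂` has the form `G ∘ E_I` with `G = P_i E_J C`. On a vector with coordinate sum
zero, `E_J C` is the identity, and `P_i` maps the hyperplane of such vectors bijectively onto
`F^{k-1}`; hence so does `G`. Since `E_I` ignores the `I`-coordinates of its first argument and
copies those of its second, `e_m` for `m ∈ I` is killed by the first part, while the sum-zero vector
`e_m - e_n` with `m ≠ n` in `I` is not killed by the second. Moreover every facet operator `T` is
surjective, so `T₂` is onto modulo `range T₁`. The set in (3) is therefore a nonempty coset of
`T₂⁻¹(range T₁)`, whose dimension follows from rank-nullity. -/

section LinearSystem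

variable {R V W M : Type*} [AddCommGroup V] [AddCommGroup W] [AddCommGroup M]

theorem exists_affineSubspace_eq_setOf_exists_add_eq [Ring R] [Module R V] [Module R W]
    [Module R M] {A : V →ₗ[R] M} {B : W →ₗ[R] M}
    (h : Codisjoint (LinearMap.range A) (LinearMap.range B)) (f : M) :
    ∃ S : AffineSubspace R W, (S : Set W) = {a | ∃ s, A s + B a = f} ∧
      S.direction = (LinearMap.range A).comap B := by
  obtain ⟨_, ⟨x, rfl⟩, _, ⟨p, rfl⟩, rfl⟩ :=
    Submodule.mem_sup.1 (h.eq_top ▸ Submodule.mem_top : f ∈ LinearMap.range A ⊔ LinearMap.range B)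
  refine ⟨AffineSubspace.mk' p _, ?_, AffineSubspace.direction_mk' _ _⟩
  ext a
  simp only [SetLike.mem_coe, AffineSubspace.mem_mk', vsub_eq_sub, Submodule.mem_comap,
    LinearMap.mem_range, Set.mem_ofPred_eq, map_sub]
  constructor
  · rintro ⟨s, hs⟩
    exact ⟨x - s, by rw [map_sub, hs]; abel⟩
  · rintro ⟨s, hs⟩
    exact ⟨x - s, by rw [map_sub, sub_eq_sub_iff_add_eq_add, ← hs]; abel⟩

theorem finrank_comap_add_finrank_of_codisjoint [DivisionRing R] [Module R W] [Module R M]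
    [FiniteDimensional R W] [FiniteDimensional R M] {U : Submodule R M} {B : W →ₗ[R] M}
    (h : Codisjoint U (LinearMap.range B)) :
    Module.finrank R (U.comap B) + Module.finrank R M =
      Module.finrank R W + Module.finrank R U := by
  have hrange : LinearMap.range (U.mkQ ∘ₗ B) = ⊤ := by
    rw [LinearMap.range_comp, Submodule.map_mkQ_eq_top, h.eq_top]
  have hker : LinearMap.ker (U.mkQ ∘ₗ B) = U.comap B := by
    rw [LinearMap.ker_comp, Submodule.ker_mkQ]
  have hrank := LinearMap.finrank_range_add_finrank_ker (U.mkQ ∘ₗ B)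
  rw [hrange, finrank_top, hker] at hrank
  have hquot := U.finrank_quotient_add_finrank
  omega

end LinearSystem

section FacetOperators

variable {F : Type*} [Field F] {k : ℕ}

theorem range_inlMap_sup_range_inrMap :
    LinearMap.range (inlMap F k) ⊔ LinearMap.range (inrMap F k) = ⊤ := by
  refine eq_top_iff.2 fun y _ => Submodule.mem_sup.2
    ⟨_, ⟨y ∘ Sum.inl, rfl⟩, _, ⟨y ∘ Sum.inr, rfl⟩, ?_⟩
  funext s
  cases s <;> simp [inlMap, inrMap]

theorem range_leftPart_sup_range_rightPart {M : Type*} [AddCommMonoid M] [Module F M]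
    (T : ((Fin k ⊕ Fin k) → F) →ₗ[F] M) :
    LinearMap.range (leftPart T) ⊔ LinearMap.range (rightPart T) = LinearMap.range T := by
  rw [leftPart, rightPart, LinearMap.range_comp, LinearMap.range_comp, ← Submodule.map_sup,
    range_inlMap_sup_range_inrMap, Submodule.map_top]

theorem delIdx_eq_succAbove {n : ℕ} (i : Fin (n + 1)) : delIdx i = i.succAbove := by
  funext j
  simp only [delIdx, Fin.succAbove, Fin.lt_def, Fin.val_castSucc]
  rfl

theorem pop_eq_removeNth {n : ℕ} (i : Fin (n + 1)) (y : Fin (n + 1) → F) :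
    Pop F i y = i.removeNth y :=
  congrArg (y ∘ ·) (delIdx_eq_succAbove i)

theorem bijOn_pop (i : Fin k) : Set.BijOn (Pop F i) {y | ∑ j, y j = 0} Set.univ := by
  obtain _ | n := k
  · exact i.elim0
  refine ⟨Set.mapsTo_univ _ _, fun y hy z hz h => ?_, fun (f : Fin n → F) _ => ?_⟩
  · have hremove : i.removeNth y = i.removeNth z := by
      rw [← pop_eq_removeNth, ← pop_eq_removeNth, h]
    have hsum : y i + ∑ j, i.removeNth y j = z i + ∑ j, i.removeNth z j := by
      rw [Fin.add_sum_removeNth, Fin.add_sum_removeNth]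
      exact hy.trans hz.symm
    rw [hremove, add_left_inj] at hsum
    rw [← i.insertNth_self_removeNth y, hsum, hremove, i.insertNth_self_removeNth]
  · refine ⟨i.insertNth (-∑ j, f j) f, ?_, ?_⟩
    · rw [Set.mem_ofPred_eq, Fin.sum_insertNth, neg_add_cancel]
    · rw [pop_eq_removeNth, Fin.removeNth_insertNth]

theorem eop_cop_apply_of_sum_eq_zero (J : Finset (Fin k)) {y : Fin k → F} (hy : ∑ j, y j = 0) :
    Eop F J (Cop F k y) = y := by
  funext m
  simp [Eop, Cop, hy]

theorem bijOn_pop_eop_cop (i : Fin k) (J : Finset (Fin k)) :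
    Set.BijOn (Pop F i ∘ₗ Eop F J ∘ₗ Cop F k) {y | ∑ j, y j = 0} Set.univ :=
  (bijOn_pop i).congr fun _ hy => congrArg (Pop F i) (eop_cop_apply_of_sum_eq_zero J hy).symm

theorem eop_surjective (I : Finset (Fin k)) : Function.Surjective (Eop F I) :=
  fun y => ⟨Sum.elim y y, by funext m; simp [Eop]⟩

theorem leftPart_eop_apply (I : Finset (Fin k)) (x : Fin k → F) (n : Fin k) :
    leftPart (Eop F I) x n = if n ∈ I then 0 else x n := by
  simp [leftPart, Eop, inlMap]

theorem rightPart_eop_apply (I : Finset (Fin k)) (a : Fin k → F) (n : Fin k) :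
    rightPart (Eop F I) a n = if n ∈ I then a n else 0 := by
  simp [rightPart, Eop, inrMap]

variable {M : Type*} [AddCommMonoid M] [Module F M] {G : (Fin k → F) →ₗ[F] M}
  {I : Finset (Fin k)}

theorem single_mem_ker_leftPart_comp_eop {m : Fin k} (hm : m ∈ I) (c : F) :
    Pi.single m c ∈ LinearMap.ker (leftPart (G ∘ₗ Eop F I)) := by
  have hzero : leftPart (Eop F I) (Pi.single m c) = 0 := by
    funext n
    rw [leftPart_eop_apply, Pi.zero_apply, ite_eq_left_iff]
    exact fun hn => Pi.single_eq_of_ne (ne_of_mem_of_not_mem hm hn).symm _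
  exact (congrArg G hzero).trans (map_zero G)

theorem rightPart_comp_eop_ne_zero (hG : Set.InjOn G {y | ∑ j, y j = 0}) (hI : 1 < #I) :
    rightPart (G ∘ₗ Eop F I) ≠ 0 := by
  intro hzero
  obtain ⟨m, hm, n, hn, hmn⟩ := Finset.one_lt_card.1 hI
  set v : Fin k → F := Pi.single m 1 - Pi.single n 1 with hv
  have hsum : ∑ j, v j = 0 := by simp [hv]
  have hfix : rightPart (Eop F I) v = v := by
    funext l
    rw [rightPart_eop_apply, ite_eq_left_iff]
    intro hl
    simp [hv, (ne_of_mem_of_not_mem hm hl).symm, (ne_of_mem_of_not_mem hn hl).symm]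
  have hGv : G v = G 0 := calc
    G v = rightPart (G ∘ₗ Eop F I) v := congrArg G hfix.symm
    _ = G 0 := by rw [hzero, LinearMap.zero_apply, map_zero]
  have hvm := congrFun (hG hsum (by simp) hGv) m
  simp [hv, hmn] at hvm

variable {T : (Fin k ⊕ Fin k → F) →ₗ[F] (Fin (k - 1) → F)}

theorem exists_eq_comp_eop_of_mem_FO2 (hT : T ∈ FO2 F k) :
    ∃ (G : (Fin k → F) →ₗ[F] (Fin (k - 1) → F)) (I : Finset (Fin k)),
      Set.BijOn G {y | ∑ j, y j = 0} Set.univ ∧ 1 < #I ∧ T = G ∘ₗ Eop F I := by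
  obtain ⟨i, J, I, -, hI, hcard, rfl⟩ := hT
  refine ⟨_, I, bijOn_pop_eop_cop i J, ?_, rfl⟩
  have := hI.card_pos
  obtain ⟨r, hr⟩ := hcard
  omega

theorem surjective_of_mem_FO (hT : T ∈ FO F k) : Function.Surjective T := by
  rcases hT with ⟨i, rfl⟩ | hT
  · exact (bijOn_pop i).surjOn.surjective.comp (eop_surjective ∅)
  · obtain ⟨G, I, hG, -, rfl⟩ := exists_eq_comp_eop_of_mem_FO2 hT
    exact hG.surjOn.surjective.comp (eop_surjective I)

end FacetOperators

theorem stmt_5_general {k : ℕ} {F : Type*} [Field F]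
    {T : ((Fin k ⊕ Fin k) → F) →ₗ[F] (Fin (k - 1) → F)} (hT : T ∈ FO F k) :
    (T ∈ FO2 F k → ∃ i j : Fin k, i ≠ j ∧
        Pi.single i (1 : F) ∈ LinearMap.ker (leftPart T) ∧
        Pi.single j (1 : F) ∈ LinearMap.ker (leftPart T)) ∧
    (T ∈ FO2 F k → 1 ≤ Module.finrank F (LinearMap.range (rightPart T))) ∧
    (∀ f : Fin (k - 1) → F, ∃ A : AffineSubspace F (Fin k → F),
        (A : Set (Fin k → F)) = {a | ∃ s : Fin k → F, leftPart T s + rightPart T a = f} ∧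
        Module.finrank F A.direction =
          Module.finrank F (LinearMap.range (leftPart T)) + 1) := by
  refine ⟨fun hT₂ => ?_, fun hT₂ => ?_, fun f => ?_⟩
  · obtain ⟨G, I, -, hI, rfl⟩ := exists_eq_comp_eop_of_mem_FO2 hT₂
    obtain ⟨m, hm, n, hn, hmn⟩ := Finset.one_lt_card.1 hI
    exact ⟨m, n, hmn, single_mem_ker_leftPart_comp_eop hm 1, single_mem_ker_leftPart_comp_eop hn 1⟩
  · obtain ⟨G, I, hG, hI, rfl⟩ := exists_eq_comp_eop_of_mem_FO2 hT₂
    rw [Submodule.one_le_finrank_iff, Ne, LinearMap.range_eq_bot]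
    exact rightPart_comp_eop_ne_zero hG.injOn hI
  · have hcodisj : Codisjoint (LinearMap.range (leftPart T)) (LinearMap.range (rightPart T)) := by
      rw [codisjoint_iff, range_leftPart_sup_range_rightPart,
        LinearMap.range_eq_top.2 (surjective_of_mem_FO hT)]
    obtain ⟨A, hA, hdir⟩ := exists_affineSubspace_eq_setOf_exists_add_eq hcodisj f
    have hrank := finrank_comap_add_finrank_of_codisjoint hcodisj
    have hk : 0 < k := by rcases hT with ⟨i, -⟩ | ⟨i, -⟩ <;> exact i.pos
    rw [Module.finrank_fin_fun, Module.finrank_fin_fun] at hrank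
    exact ⟨A, hA, by rw [hdir]; omega⟩

/-- properties of the facet operators.  For `T ∈ FO`:
(1) if `T ∈ FO₂` then two standard basis vectors lie in `ker T₁`;
(2) if `T ∈ FO₂` then `rank T₂ ≥ 1`;
(3) for every `f ∈ F^{k-1}` the set `{a : ∃ s, T₁ s + T₂ a = f}` is an affine
subspace of `F^k` of dimension `rank T₁ + 1`. -/
theorem stmt_5 (k : ℕ) (hk : 2 ≤ k) (F : Type) [Field F] [Fintype F]
    (hchar : ringChar F = 2)
    (T : ((Fin k ⊕ Fin k) → F) →ₗ[F] (Fin (k - 1) → F)) (hT : T ∈ FO F k) :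
    (T ∈ FO2 F k → ∃ i j : Fin k, i ≠ j ∧
        Pi.single i (1 : F) ∈ LinearMap.ker (leftPart T) ∧
        Pi.single j (1 : F) ∈ LinearMap.ker (leftPart T)) ∧
    (T ∈ FO2 F k → 1 ≤ Module.finrank F (LinearMap.range (rightPart T))) ∧
    (∀ f : Fin (k - 1) → F, ∃ A : AffineSubspace F (Fin k → F),
        (A : Set (Fin k → F)) = {a | ∃ s : Fin k → F, leftPart T s + rightPart T a = f} ∧
        Module.finrank F A.direction =
          Module.finrank F (LinearMap.range (leftPart T)) + 1) :=
  stmt_5_general hT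
end

section
/- Let k ≥ 2 and let F be a finite field of characteristic 2. For every edge operator E ∈ EO, the kernel of E_2 has dimension at most k−1; equivalently, E_2 is not the zero map. -/
open Finset

/-!
The map `(E_I)₂` restricts vectors to `I`, so it fixes every vector supported in `I`, and `E_J C`
fixes every vector with coordinate sum zero, since `J + I` acts on such vectors as the identity.
Every edge operator thus has a second part fixing some nonzero vector: a standard basis vector
`e_i` with `i ∈ I` for `E_I`, and `e_i - e_j` with distinct `i, j ∈ I` for `E_J C E_I`.
-/

theorem nontrivial_of_nonempty_of_even_card {α : Type*} {s : Finset α} (hs : s.Nonempty)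
    (heven : Even s.card) : s.Nontrivial := by
  have hne_one : s.card ≠ 1 := fun h ↦ Nat.not_even_one (h ▸ heven)
  have hpos : 0 < s.card := hs.card_pos
  exact one_lt_card_iff_nontrivial.mp (by omega)

section EdgeOperators

variable {F : Type*} [Field F] {k : ℕ}

theorem rightPart_comp {M N : Type*} [AddCommMonoid M] [Module F M] [AddCommMonoid N] [Module F N]
    (S : M →ₗ[F] N) (T : ((Fin k ⊕ Fin k) → F) →ₗ[F] M) :
    rightPart (S ∘ₗ T) = S ∘ₗ rightPart T :=
  rfl

theorem rightPart_Eop_apply (I : Finset (Fin k)) (a : Fin k → F) (i : Fin k) :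
    rightPart (Eop F I) a i = if i ∈ I then a i else 0 :=
  rfl

theorem rightPart_Eop_eq_self {I : Finset (Fin k)} {a : Fin k → F} (ha : ∀ i ∉ I, a i = 0) :
    rightPart (Eop F I) a = a := by
  funext i
  rw [rightPart_Eop_apply, ite_eq_left_iff]
  exact fun hi ↦ (ha i hi).symm

theorem Eop_Cop_eq_self (J : Finset (Fin k)) {x : Fin k → F} (hx : ∑ j, x j = 0) :
    Eop F J (Cop F k x) = x := by
  funext i
  simp [Eop, Cop, hx]

theorem rightPart_Eop_comp_Cop_comp_Eop_eq_self (J : Finset (Fin k)) {I : Finset (Fin k)}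
    {a : Fin k → F} (ha : ∀ i ∉ I, a i = 0) (hsum : ∑ i, a i = 0) :
    rightPart (Eop F J ∘ₗ Cop F k ∘ₗ Eop F I) a = a := by
  rw [rightPart_comp, rightPart_comp, LinearMap.comp_apply, LinearMap.comp_apply,
    rightPart_Eop_eq_self ha, Eop_Cop_eq_self J hsum]

theorem rightPart_Eop_ne_zero {I : Finset (Fin k)} (hI : I.Nonempty) :
    rightPart (Eop F I) ≠ 0 := by
  obtain ⟨i, hi⟩ := hI
  have hsupp : ∀ l ∉ I, (Pi.single i 1 : Fin k → F) l = 0 := fun l hl ↦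
    Pi.single_eq_of_ne (ne_of_mem_of_not_mem hi hl).symm 1
  refine DFunLike.ne_iff.mpr ⟨Pi.single i 1, ?_⟩
  rw [rightPart_Eop_eq_self hsupp, LinearMap.zero_apply]
  exact Pi.single_ne_zero_iff.mpr one_ne_zero

theorem rightPart_Eop_comp_Cop_comp_Eop_ne_zero (J : Finset (Fin k)) {I : Finset (Fin k)}
    (hI : I.Nontrivial) : rightPart (Eop F J ∘ₗ Cop F k ∘ₗ Eop F I) ≠ 0 := by
  obtain ⟨i, hi, j, hj, hij⟩ := hI
  let a : Fin k → F := Pi.single i 1 - Pi.single j 1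
  have hsupp : ∀ l ∉ I, a l = 0 := fun l hl ↦ by
    simp [a, (ne_of_mem_of_not_mem hi hl).symm, (ne_of_mem_of_not_mem hj hl).symm]
  have hsum : ∑ l, a l = 0 := by simp [a, sum_sub_distrib]
  have hai : a i = 1 := by simp [a, hij]
  refine DFunLike.ne_iff.mpr ⟨a, ?_⟩
  rw [rightPart_Eop_comp_Cop_comp_Eop_eq_self J hsupp hsum, LinearMap.zero_apply]
  exact Function.ne_iff.mpr ⟨i, hai ▸ one_ne_zero⟩

theorem rightPart_ne_zero_of_mem_EO {T : ((Fin k ⊕ Fin k) → F) →ₗ[F] (Fin k → F)}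
    (hT : T ∈ EO F k) : rightPart T ≠ 0 := by
  rcases hT with ⟨I, hodd, rfl⟩ | ⟨J, I, -, hI, heven, rfl⟩
  · exact rightPart_Eop_ne_zero (card_pos.mp hodd.pos)
  · exact rightPart_Eop_comp_Cop_comp_Eop_ne_zero J (nontrivial_of_nonempty_of_even_card hI heven)

theorem stmt_6_general {T : ((Fin k ⊕ Fin k) → F) →ₗ[F] (Fin k → F)} (hT : T ∈ EO F k) :
    Module.finrank F (LinearMap.ker (rightPart T)) ≤ k - 1 ∧ rightPart T ≠ 0 := by
  have hne : rightPart T ≠ 0 := rightPart_ne_zero_of_mem_EO hT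
  have hlt : Module.finrank F (LinearMap.ker (rightPart T)) < k := by
    simpa only [Module.finrank_fin_fun] using
      Submodule.finrank_lt (mt LinearMap.ker_eq_top.mp hne)
  exact ⟨Nat.le_sub_one_of_lt hlt, hne⟩

end EdgeOperators

/-- for every edge operator `T ∈ EO`, `dim ker T₂ ≤ k - 1`;
equivalently `T₂` is not the zero map. -/
theorem stmt_6 (k : ℕ) (hk : 2 ≤ k) (F : Type) [Field F] [Fintype F]
    (hchar : ringChar F = 2)
    (T : ((Fin k ⊕ Fin k) → F) →ₗ[F] (Fin k → F)) (hT : T ∈ EO F k) :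
    Module.finrank F (LinearMap.ker (rightPart T)) ≤ k - 1 ∧ rightPart T ≠ 0 :=
  stmt_6_general hT
end

section
/- For every k ≥ 2 there exists D = D(k) > 0 such that the following holds for all n. Let F be the finite field with 2^m elements where 2n ≤ 2^m ≤ 4n, let τ : [n] ↪ F* be injective, let C > 0, let G ∈ H_{k−1}(n), and let S ⊆ K_k(G) be a K_k-decomposition of G. If τ(G) is C-affine-bounded, then for every f ∈ F^{k−1} and every facet operator F ∈ FO_2: |τ(S) ∩ F_1^{−1}(f)| ≤ D·C·(|S|/n^k)·|F_1^{−1}(f)|. -/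
open Finset

/-- A set `S ⊆ F^ι` is `C`-affine-bounded if for every affine subspace `A` of
dimension at least 1, `|A ∩ S| ≤ C·|A|·|S|/|F|^{|ι|}`. -/
def AffineBounded (F : Type*) [Field F] [Fintype F] {ι : Type*} [Fintype ι]
    (C : ℝ) (S : Set (ι → F)) : Prop :=
  ∀ A : AffineSubspace F (ι → F), (A : Set (ι → F)).Nonempty →
    1 ≤ Module.finrank F A.direction →
    (Set.ncard ((A : Set (ι → F)) ∩ S) : ℝ) ≤
      C * (Nat.card (A : Set (ι → F))) * (Set.ncard S) / (Fintype.card F : ℝ) ^ (Fintype.card ι)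

open Finset

/-- A set `S` of `k`-subsets, each having all its `(k-1)`-subsets in `G`,
such that every facet of `G` lies in exactly one edge of `S`. -/
def IsKDecompositionOf {V : Type*} [DecidableEq V] (k : ℕ) (G S : Finset (Finset V)) : Prop :=
  (∀ e ∈ S, e.card = k ∧ ∀ f ⊆ e, f.card = k - 1 → f ∈ G) ∧
  (∀ f ∈ G, ∃! e, e ∈ S ∧ f ⊆ e)

/-!
For `T = P_i E_J C E_I` in `FO₂`, the set `I` has at least two elements `s ≠ t`, so `T₁` ignores the
coordinates `s` and `t`. Deleting coordinate `t` from an edge of `S` gives a facet of `G` that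
determines the edge, so the edges of `S` in a fibre of `T₁` are at most as many as the facets of `G`
in the corresponding fibres of the maps induced on `F^{k-1}`, one for each of the `(k-1)!` possible
orderings of the facet relative to the edge. Each induced map still ignores a coordinate, so its
nonempty fibres are affine subspaces of positive dimension and affine-boundedness applies. Finally
`|G| = k|S|`, which yields `D = k!`.
-/

section Enumerations

variable {V W ι : Type*}

/-- `ord` enumerates each member `e` of the family `H`: the coordinates of `ord e` are the elements
of `e`, without repetition. This models the arbitrary ordering of each member of `H` under which
`τ(H)` becomes a set of vectors indexed by `ι`. -/
def IsEnumeration (ord : Finset V → ι → V) (H : Finset (Finset V)) : Prop :=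
  ∀ e ∈ H, Function.Injective (ord e) ∧ Set.range (ord e) = e

/-- The set of vectors `τ(H)`, with the members of `H` ordered by `ord`. -/
def coordVectors (τ : V → W) (ord : Finset V → ι → V) (H : Finset (Finset V)) : Set (ι → W) :=
  (fun e => τ ∘ ord e) '' (H : Set (Finset V))

theorem isEnumeration_of_image_univ [DecidableEq V] {l : ℕ} {ord : Finset V → Fin l → V}
    {H : Finset (Finset V)} (hcard : ∀ e ∈ H, e.card = l)
    (himage : ∀ e : Finset V, e.card = l → univ.image (ord e) = e) : IsEnumeration ord H := by
  intro e he
  have hord := himage e (hcard e he)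
  refine ⟨fun i j hij => injOn_of_card_image_eq (s := univ) ?_ (by simp) (by simp) hij, ?_⟩
  · rw [hord, hcard e he, card_univ, Fintype.card_fin]
  · rw [← Set.image_univ, ← coe_univ, ← coe_image, hord]

theorem IsEnumeration.card_eq [Fintype ι] {ord : Finset V → ι → V} {H : Finset (Finset V)}
    (hord : IsEnumeration ord H) {e : Finset V} (he : e ∈ H) : e.card = Fintype.card ι := by
  rw [← Set.ncard_coe_finset, ← (hord e he).2, Set.ncard_range_of_injective (hord e he).1,
    Nat.card_eq_fintype_card]

theorem IsEnumeration.injOn_comp {τ : V → W} (hτ : Function.Injective τ)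
    {ord : Finset V → ι → V} {H : Finset (Finset V)} (hord : IsEnumeration ord H) :
    Set.InjOn (fun e => τ ∘ ord e) H := by
  intro e he e' he' h
  rw [← coe_inj, ← (hord e he).2, ← (hord e' he').2, hτ.comp_left h]

theorem ncard_coordVectors_inter {τ : V → W} (hτ : Function.Injective τ)
    {ord : Finset V → ι → V} {H : Finset (Finset V)} (hord : IsEnumeration ord H)
    (A : Set (ι → W)) [DecidablePred (· ∈ A)] :
    (coordVectors τ ord H ∩ A).ncard = #{e ∈ H | τ ∘ ord e ∈ A} := by
  have himage : coordVectors τ ord H ∩ A =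
      (fun e => τ ∘ ord e) '' ({e ∈ H | τ ∘ ord e ∈ A} : Finset (Finset V)) := by
    rw [coordVectors, ← Set.image_inter_preimage, coe_filter]
    rfl
  rw [himage, ((hord.injOn_comp hτ).mono (coe_subset.2 (filter_subset _ _))).ncard_image,
    Set.ncard_coe_finset]

theorem ncard_coordVectors {τ : V → W} (hτ : Function.Injective τ)
    {ord : Finset V → ι → V} {H : Finset (Finset V)} (hord : IsEnumeration ord H) :
    (coordVectors τ ord H).ncard = #H := by
  rw [coordVectors, (hord.injOn_comp hτ).ncard_image, Set.ncard_coe_finset]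

theorem exists_equiv_comp_eq {κ : Type*} {u : κ → V} {v : ι → V} (hu : Function.Injective u)
    (hv : Function.Injective v) (h : Set.range u = Set.range v) : ∃ σ : κ ≃ ι, v ∘ σ = u := by
  refine ⟨((Equiv.ofInjective u hu).trans (Equiv.setCongr h)).trans
    (Equiv.ofInjective v hv).symm, ?_⟩
  funext j
  simp [Equiv.apply_ofInjective_symm]

end Enumerations

namespace IsKDecompositionOf

variable {V ι κ : Type*} [DecidableEq V] {k : ℕ} {G S : Finset (Finset V)}

theorem card_facets_eq (hS : IsKDecompositionOf k G S) (hG : ∀ g ∈ G, g.card = k - 1)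
    (hk : k ≠ 0) : #G = k * #S := by
  have hedges : ∀ g ∈ G, #(S.bipartiteAbove (· ⊆ ·) g) = 1 := fun g hg => by
    simpa [bipartiteAbove, card_eq_one_iff_existsUnique] using hS.2 g hg
  have hfacets : ∀ e ∈ S, #(G.bipartiteBelow (· ⊆ ·) e) = k := fun e he => by
    have : G.bipartiteBelow (· ⊆ ·) e = e.powersetCard (k - 1) := by
      ext g
      simp only [mem_bipartiteBelow, mem_powersetCard]
      exact ⟨fun ⟨hg, hge⟩ => ⟨hge, hG g hg⟩, fun ⟨hge, hg⟩ => ⟨(hS.1 e he).2 g hge hg, hge⟩⟩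
    obtain ⟨l, rfl⟩ := Nat.exists_eq_succ_of_ne_zero hk
    rw [this, card_powersetCard, (hS.1 e he).1]
    simp
  simpa [mul_comm] using card_mul_eq_card_mul _ hedges hfacets

theorem exists_facet_equiv (hS : IsKDecompositionOf k G S)
    {ordG : Finset V → κ → V} (hordG : IsEnumeration ordG G)
    {ordS : Finset V → ι → V} (hordS : IsEnumeration ordS S)
    (t : ι) {e : Finset V} (he : e ∈ S) :
    ∃ g ∈ G, g ⊆ e ∧ ∃ σ : κ ≃ {i // i ≠ t}, ordG g = fun j => ordS e (σ j) := by
  obtain ⟨hinj, hrange⟩ := hordS e he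
  have ht : ordS e t ∈ e := by simp [← mem_coe, ← hrange]
  have hG : e.erase (ordS e t) ∈ G :=
    (hS.1 e he).2 _ (erase_subset _ _) (by rw [card_erase_of_mem ht, (hS.1 e he).1])
  have hfacet : Set.range (fun i : {i // i ≠ t} => ordS e i) = e.erase (ordS e t) := by
    rw [coe_erase, ← hrange, ← Set.image_singleton, ← Set.image_compl_eq_range_sdiff_image hinj,
      Set.image_eq_range]
    rfl
  obtain ⟨hinjG, hrangeG⟩ := hordG _ hG
  obtain ⟨σ, hσ⟩ := exists_equiv_comp_eq hinjG (hinj.comp Subtype.val_injective)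
    (hrangeG.trans hfacet.symm)
  exact ⟨_, hG, erase_subset _ _, σ, hσ.symm⟩

end IsKDecompositionOf

section Fibres

variable {F M ι κ : Type*} [Field F] [AddCommGroup M] [Module F M]

theorem AffineBounded.ncard_inter_preimage_le [Fintype F] [Fintype ι] {C : ℝ} {X : Set (ι → F)}
    (hX : AffineBounded F C X) {L : (ι → F) →ₗ[F] M} (hL : LinearMap.ker L ≠ ⊥) (f : M) :
    ((X ∩ L ⁻¹' {f}).ncard : ℝ) ≤
      C * (L ⁻¹' {f}).ncard * X.ncard / (Fintype.card F : ℝ) ^ Fintype.card ι := by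
  rcases (L ⁻¹' {f}).eq_empty_or_nonempty with hempty | ⟨p, hp⟩
  · simp [hempty]
  · have hA : (AffineSubspace.mk' p (LinearMap.ker L) : Set (ι → F)) = L ⁻¹' {f} := by
      have hLp : L p = f := hp
      ext x
      simp [AffineSubspace.mem_mk', sub_eq_zero, hLp]
    have hbound := hX (AffineSubspace.mk' p (LinearMap.ker L)) (hA ▸ ⟨p, hp⟩) <| by
      rwa [AffineSubspace.direction_mk', Submodule.one_le_finrank_iff]
    rwa [hA, Nat.card_coe_set_eq, Set.inter_comm] at hbound

variable [DecidableEq ι] {t : ι}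

theorem map_eq_map_of_forall_ne {L : (ι → F) →ₗ[F] M} (ht : L (Pi.single t 1) = 0)
    {x y : ι → F} (hxy : ∀ i ≠ t, x i = y i) : L x = L y := by
  have hsub : x - y = (x t - y t) • Pi.single t 1 := by
    funext i
    by_cases hi : i = t
    · simp [hi]
    · simp [hi, hxy i hi]
  rw [← sub_eq_zero, ← map_sub, hsub, map_smul, ht, smul_zero]

/-- The linear map `F^κ → M` that relabels its argument along `σ`, puts `0` in the missing
coordinate `t` and applies `L`. When `L` ignores coordinate `t`, this is `L` viewed as a function of
the remaining coordinates. -/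
noncomputable def dropCoord (L : (ι → F) →ₗ[F] M) (σ : κ ≃ {i // i ≠ t}) : (κ → F) →ₗ[F] M :=
  L ∘ₗ Function.ExtendByZero.linearMap F fun j => (σ j : ι)

theorem dropCoord_comp {L : (ι → F) →ₗ[F] M} (ht : L (Pi.single t 1) = 0)
    (σ : κ ≃ {i // i ≠ t}) (x : ι → F) : dropCoord L σ (fun j => x (σ j)) = L x := by
  refine map_eq_map_of_forall_ne ht fun i hi => ?_
  have hinj : Function.Injective fun j => (σ j : ι) := Subtype.val_injective.comp σ.injective
  simpa using hinj.extend_apply (fun j => x (σ j)) 0 (σ.symm ⟨i, hi⟩)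

theorem ker_dropCoord_ne_bot {L : (ι → F) →ₗ[F] M} {s : ι} (hst : s ≠ t)
    (hs : L (Pi.single s 1) = 0) (ht : L (Pi.single t 1) = 0) (σ : κ ≃ {i // i ≠ t}) :
    LinearMap.ker (dropCoord L σ) ≠ ⊥ := by
  refine (Submodule.ne_bot_iff _).2 ⟨fun j => (Pi.single s 1 : ι → F) (σ j), ?_, fun h => ?_⟩
  · rw [LinearMap.mem_ker, dropCoord_comp ht, hs]
  · simpa using congrFun h (σ.symm ⟨s, hst⟩)

theorem ncard_preimage_eq_card_mul_dropCoord [Fintype F] {L : (ι → F) →ₗ[F] M}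
    (ht : L (Pi.single t 1) = 0) (σ : κ ≃ {i // i ≠ t}) (f : M) :
    (L ⁻¹' {f}).ncard = Fintype.card F * (dropCoord L σ ⁻¹' {f}).ncard := by
  let split : (ι → F) ≃ F × (κ → F) :=
    (Equiv.funSplitAt t F).trans ((Equiv.refl F).prodCongr (σ.symm.arrowCongr (Equiv.refl F)))
  have hsplit : L ⁻¹' {f} = split ⁻¹' (Set.univ ×ˢ (dropCoord L σ ⁻¹' {f})) := by
    ext x
    have : (split x).2 = fun j => x (σ j) := rfl
    simp [this, dropCoord_comp ht]
  rw [hsplit, Set.ncard_preimage_of_injective_subset_range split.injective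
      (split.surjective.range_eq ▸ Set.subset_univ _), Set.ncard_prod, Set.ncard_univ,
    Nat.card_eq_fintype_card]

end Fibres

section Counting

variable {F M V : Type*} [Field F] [AddCommGroup M] [Module F M] [DecidableEq V]
  {G S : Finset (Finset V)} {τ : V → F}

theorem ncard_edges_preimage_le_sum_facets {ι κ : Type*} [Fintype ι] [DecidableEq ι] [Fintype κ]
    [DecidableEq κ] {k : ℕ} (hS : IsKDecompositionOf k G S) (hτ : Function.Injective τ)
    {ordG : Finset V → κ → V} (hordG : IsEnumeration ordG G)
    {ordS : Finset V → ι → V} (hordS : IsEnumeration ordS S)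
    {L : (ι → F) →ₗ[F] M} {t : ι} (ht : L (Pi.single t 1) = 0) (f : M) :
    (coordVectors τ ordS S ∩ L ⁻¹' {f}).ncard ≤
      ∑ σ : κ ≃ {i // i ≠ t}, (coordVectors τ ordG G ∩ dropCoord L σ ⁻¹' {f}).ncard := by
  classical
  choose! facet hfacetG hfacet_sub hfacet using
    fun e (he : e ∈ S) => hS.exists_facet_equiv hordG hordS t he
  simp only [ncard_coordVectors_inter hτ hordS, ncard_coordVectors_inter hτ hordG]
  refine (card_le_card_of_injOn facet (fun e he => ?_) fun e he e' he' h => ?_).trans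
    card_biUnion_le
  · obtain ⟨heS, hef⟩ := mem_filter.1 he
    obtain ⟨σ, hσ⟩ := hfacet e heS
    refine mem_biUnion.2 ⟨σ, mem_univ σ, mem_filter.2 ⟨hfacetG e heS, ?_⟩⟩
    rw [hσ]
    exact (dropCoord_comp ht σ (τ ∘ ordS e)).trans hef
  · have heS := (mem_filter.1 he).1
    have heS' := (mem_filter.1 he').1
    exact (hS.2 (facet e) (hfacetG e heS)).unique ⟨heS, hfacet_sub e heS⟩
      ⟨heS', h ▸ hfacet_sub e' heS'⟩

theorem ncard_edges_preimage_le [Fintype F] {k : ℕ} (hS : IsKDecompositionOf k G S)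
    (hτ : Function.Injective τ) {ordG : Finset V → Fin (k - 1) → V} (hordG : IsEnumeration ordG G)
    {ordS : Finset V → Fin k → V} (hordS : IsEnumeration ordS S)
    {C : ℝ} (hB : AffineBounded F C (coordVectors τ ordG G))
    {L : (Fin k → F) →ₗ[F] M} {s t : Fin k} (hst : s ≠ t)
    (hs : L (Pi.single s 1) = 0) (ht : L (Pi.single t 1) = 0) (f : M) :
    ((coordVectors τ ordS S ∩ L ⁻¹' {f}).ncard : ℝ) ≤
      k.factorial * C * (#S / (Fintype.card F : ℝ) ^ k) * (L ⁻¹' {f}).ncard := by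
  have hk : k ≠ 0 := t.pos.ne'
  have hq : (Fintype.card F : ℝ) ≠ 0 := by exact_mod_cast Fintype.card_ne_zero
  have hG : #G = k * #S :=
    hS.card_facets_eq (fun g hg => (hordG.card_eq hg).trans (Fintype.card_fin _)) hk
  have hfacets (σ : Fin (k - 1) ≃ {i // i ≠ t}) :
      ((coordVectors τ ordG G ∩ dropCoord L σ ⁻¹' {f}).ncard : ℝ) ≤
        k * C * (#S / (Fintype.card F : ℝ) ^ k) * (L ⁻¹' {f}).ncard := by
    refine (hB.ncard_inter_preimage_le (ker_dropCoord_ne_bot hst hs ht σ) f).trans_eq ?_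
    rw [ncard_coordVectors hτ hordG, hG, ncard_preimage_eq_card_mul_dropCoord ht σ,
      Fintype.card_fin, ← pow_sub_one_mul hk (Fintype.card F : ℝ)]
    push_cast
    field_simp
  have hcard : Fintype.card (Fin (k - 1) ≃ {i // i ≠ t}) = (k - 1).factorial := by
    rw [Fintype.card_equiv (Fintype.equivOfCardEq (by simp)), Fintype.card_fin]
  calc ((coordVectors τ ordS S ∩ L ⁻¹' {f}).ncard : ℝ)
      ≤ ∑ σ : Fin (k - 1) ≃ {i // i ≠ t},
          ((coordVectors τ ordG G ∩ dropCoord L σ ⁻¹' {f}).ncard : ℝ) := by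
        exact_mod_cast ncard_edges_preimage_le_sum_facets hS hτ hordG hordS ht f
    _ ≤ ∑ _σ : Fin (k - 1) ≃ {i // i ≠ t},
          k * C * (#S / (Fintype.card F : ℝ) ^ k) * (L ⁻¹' {f}).ncard :=
        sum_le_sum fun σ _ => hfacets σ
    _ = k.factorial * C * (#S / (Fintype.card F : ℝ) ^ k) * (L ⁻¹' {f}).ncard := by
        rw [sum_const, card_univ, hcard, nsmul_eq_mul, ← Nat.mul_factorial_pred hk]
        push_cast
        ring

end Counting

section FacetOperators

variable {F : Type*} [Field F] {k : ℕ}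

theorem leftPart_Eop_single {I : Finset (Fin k)} {s : Fin k} (hs : s ∈ I) :
    leftPart (Eop F I) (Pi.single s 1) = 0 := by
  funext i
  by_cases hi : i ∈ I
  · simp [leftPart, Eop, inlMap, hi]
  · have : i ≠ s := fun h => hi (h ▸ hs)
    simp [leftPart, Eop, inlMap, hi, this]

theorem exists_ne_leftPart_single_eq_zero_of_mem_FO2
    {T : ((Fin k ⊕ Fin k) → F) →ₗ[F] (Fin (k - 1) → F)} (hT : T ∈ FO2 F k) :
    ∃ s t, s ≠ t ∧ leftPart T (Pi.single s 1) = 0 ∧ leftPart T (Pi.single t 1) = 0 := by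
  obtain ⟨i, J, I, -, hI, hI_even, rfl⟩ := hT
  have hI_card : 1 < #I := by
    have := hI.card_pos
    grind
  obtain ⟨s, hs, t, ht, hst⟩ := one_lt_card.1 hI_card
  have hkill {r : Fin k} (hr : r ∈ I) :
      leftPart (Pop F i ∘ₗ Eop F J ∘ₗ Cop F k ∘ₗ Eop F I) (Pi.single r 1) = 0 := by
    change (Pop F i ∘ₗ Eop F J ∘ₗ Cop F k) (leftPart (Eop F I) (Pi.single r 1)) = 0
    rw [leftPart_Eop_single hr, map_zero]
  exact ⟨s, t, hst, hkill hs, hkill ht⟩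

end FacetOperators

theorem stmt_7_general {F V : Type*} [Field F] [Fintype F] [Fintype V] [DecidableEq V] {k : ℕ}
    {τ : V → F} (hτ : Function.Injective τ) {C : ℝ} (hC : 0 ≤ C) {G S : Finset (Finset V)}
    (hS : IsKDecompositionOf k G S)
    {ordG : Finset V → Fin (k - 1) → V} (hordG : IsEnumeration ordG G)
    {ordS : Finset V → Fin k → V} (hordS : IsEnumeration ordS S)
    (hB : AffineBounded F C (coordVectors τ ordG G))
    {T : ((Fin k ⊕ Fin k) → F) →ₗ[F] (Fin (k - 1) → F)} (hT : T ∈ FO2 F k)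
    (f : Fin (k - 1) → F) :
    ((coordVectors τ ordS S ∩ leftPart T ⁻¹' {f}).ncard : ℝ) ≤
      k.factorial * C * (#S / (Fintype.card V : ℝ) ^ k) * (leftPart T ⁻¹' {f}).ncard := by
  obtain ⟨s, t, hst, hs, ht⟩ := exists_ne_leftPart_single_eq_zero_of_mem_FO2 hT
  have hbound := ncard_edges_preimage_le hS hτ hordG hordS hB hst hs ht f
  rcases S.eq_empty_or_nonempty with rfl | ⟨e, -⟩
  · simp [coordVectors]
  · have hV : (0 : ℝ) < Fintype.card V := by
      exact_mod_cast Fintype.card_pos_iff.2 ⟨ordS e t⟩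
    have hVF : (Fintype.card V : ℝ) ≤ Fintype.card F := by
      exact_mod_cast Fintype.card_le_of_injective τ hτ
    refine hbound.trans ?_
    gcongr

/-- affine-boundedness carries over to `K_k`-decompositions:
if `τ(G)` is `C`-affine-bounded and `S` is a `K_k`-decomposition of `G`, then for
every `f ∈ F^{k-1}` and every facet operator `T ∈ FO₂`,
`|τ(S) ∩ T₁⁻¹(f)| ≤ D·C·(|S|/n^k)·|T₁⁻¹(f)|`. -/
theorem stmt_7 (k : ℕ) (hk : 2 ≤ k) :
    ∃ D : ℝ, 0 < D ∧
      ∀ (n m : ℕ) (F : Type) [Field F] [Fintype F],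
        ringChar F = 2 → Fintype.card F = 2 ^ m → 2 * n ≤ 2 ^ m → 2 ^ m ≤ 4 * n →
        ∀ τ : Fin n → F, Function.Injective τ → (∀ v, τ v ≠ 0) →
          ∀ C : ℝ, 0 < C →
            ∀ G S : Finset (Finset (Fin n)), (∀ f ∈ G, f.card = k - 1) →
              IsKDecompositionOf k G S →
              ∀ ordG : Finset (Fin n) → Fin (k - 1) → Fin n,
                (∀ f : Finset (Fin n), f.card = k - 1 →
                    Finset.image (ordG f) Finset.univ = f) →
              ∀ ordS : Finset (Fin n) → Fin k → Fin n,
                (∀ e : Finset (Fin n), e.card = k →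
                    Finset.image (ordS e) Finset.univ = e) →
              AffineBounded F C ((fun f => τ ∘ ordG f) '' (G : Set (Finset (Fin n)))) →
              ∀ (f : Fin (k - 1) → F)
                (T : ((Fin k ⊕ Fin k) → F) →ₗ[F] (Fin (k - 1) → F)), T ∈ FO2 F k →
                (Set.ncard ((fun e => τ ∘ ordS e) '' (S : Set (Finset (Fin n))) ∩
                    leftPart T ⁻¹' {f}) : ℝ) ≤
                  D * C * ((S.card : ℝ) / (n : ℝ) ^ k) *
                    (Set.ncard (leftPart T ⁻¹' {f}) : ℝ) := by
  refine ⟨k.factorial, by positivity, ?_⟩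
  intro n m F _ _ _ _ _ _ τ hτ _ C hC G S hG hS ordG hordG ordS hordS hB f T hT
  simpa only [Fintype.card_fin, coordVectors] using stmt_7_general hτ hC.le hS
    (isEnumeration_of_image_univ hG hordG)
    (isEnumeration_of_image_univ (fun e he => (hS.1 e he).1) hordS) hB hT f
end

section
/- For every k ≥ 2 there exists D = D(k) > 0 such that the following holds for all n. Let F be the finite field with 2^m elements where 2n ≤ 2^m ≤ 4n, let τ : [n] ↪ F* be injective, let C > 0, and let L ∈ H_{k−1}(n) be such that τ(L) is C-affine-bounded. Then for every s ∈ F^k: Σ_{F ∈ FO_2} |ker F_2| · |(F_1 s + im F_2) ∩ τ(L)| ≤ D·C·|F|·|L|. -/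
open Finset

open Finset

open Classical in
/-- The facet operators `FO₂` as a finite set. -/
noncomputable def FO2fin (F : Type*) [Field F] (k : ℕ) :
    Finset (((Fin k ⊕ Fin k) → F) →ₗ[F] (Fin (k - 1) → F)) :=
  ((Finset.univ : Finset (Fin k × Finset (Fin k) × Finset (Fin k))).filter
      fun t => Even t.2.1.card ∧ t.2.2.Nonempty ∧ Even t.2.2.card).image
    fun t => Pop F t.1 ∘ₗ Eop F t.2.1 ∘ₗ Cop F k ∘ₗ Eop F t.2.2

/-!
Each weighted term `|ker T₂| · |(T₁ s + im T₂) ∩ S|` is bounded separately. As soon as `T₂ ≠ 0`, the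
coset `T₁ s + im T₂` is an affine subspace of positive dimension with `|im T₂|` points, so affine
boundedness and rank-nullity `|ker T₂| · |im T₂| = |F|^k` bound the term by
`C · |F|^k · |S| / |F|^(k-1) = C · |F| · |S|`. There are at most `k · 2^k · 2^k` terms.

It remains to see that `T₂ ≠ 0` for `T = P_i E_J C E_I`. A vector `x` supported on `I` is unchanged by
the second block of `E_I`; if moreover its coordinates sum to `0`, then `C x = (x, x)`, which every
`E_J` collapses to `x` again, so that `T₂ x = P_i x`. Since `I` has two elements `p ≠ q`, and `p` may
be taken distinct from `i`, the vector `x = e_p - e_q` works.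
-/

section FacetOperators

variable {F : Type*} [Field F] {k : ℕ}

lemma exists_delIdx_eq {i p : Fin k} (h : p ≠ i) : ∃ j, delIdx i j = p := by
  cases k with
  | zero => exact i.elim0
  | succ m =>
    obtain ⟨j, rfl⟩ := Fin.exists_succAbove_eq h
    exact ⟨j, rfl⟩

lemma Eop_inrMap {I : Finset (Fin k)} {x : Fin k → F} (hx : ∀ r ∉ I, x r = 0) :
    Eop F I (inrMap F k x) = x := by
  funext r
  by_cases hr : r ∈ I
  · simp [Eop, inrMap, hr]
  · simp [Eop, inrMap, hr, hx r hr]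

lemma Cop_of_sum_eq_zero {x : Fin k → F} (hx : ∑ r, x r = 0) : Cop F k x = Sum.elim x x := by
  simp [Cop, hx]

lemma Eop_sumElim_self (J : Finset (Fin k)) (x : Fin k → F) : Eop F J (Sum.elim x x) = x := by
  funext r
  simp [Eop]

lemma rightPart_facetOp_apply (i : Fin k) (J : Finset (Fin k)) {I : Finset (Fin k)}
    {x : Fin k → F} (hI : ∀ r ∉ I, x r = 0) (hsum : ∑ r, x r = 0) :
    rightPart (Pop F i ∘ₗ Eop F J ∘ₗ Cop F k ∘ₗ Eop F I) x = Pop F i x := by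
  simp only [rightPart, LinearMap.comp_apply, Eop_inrMap hI, Cop_of_sum_eq_zero hsum,
    Eop_sumElim_self]

lemma rightPart_facetOp_ne_zero (i : Fin k) (J : Finset (Fin k)) {I : Finset (Fin k)}
    (hI : I.Nontrivial) : rightPart (Pop F i ∘ₗ Eop F J ∘ₗ Cop F k ∘ₗ Eop F I) ≠ 0 := by
  obtain ⟨p, hp, hpi⟩ := hI.exists_ne i
  obtain ⟨q, hq, hqp⟩ := hI.exists_ne p
  obtain ⟨j, hj⟩ := exists_delIdx_eq hpi
  let x : Fin k → F := Pi.single p 1 - Pi.single q 1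
  have hsupp : ∀ r ∉ I, x r = 0 := fun r hr => by
    simp [x, ne_of_mem_of_not_mem hp hr, ne_of_mem_of_not_mem hq hr]
  have hsum : ∑ r, x r = 0 := by simp [x]
  have hxj : Pop F i x j = 1 := by
    simp [Pop, LinearMap.funLeft_apply, hj, x, hqp.symm]
  intro h0
  rw [← rightPart_facetOp_apply i J hsupp hsum, h0] at hxj
  exact zero_ne_one hxj

lemma rightPart_ne_zero_of_mem_FO2 {T : ((Fin k ⊕ Fin k) → F) →ₗ[F] (Fin (k - 1) → F)}
    (hT : T ∈ FO2 F k) : rightPart T ≠ 0 := by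
  obtain ⟨i, J, I, -, hIne, ⟨r, hr⟩, rfl⟩ := hT
  have hIpos := hIne.card_pos
  exact rightPart_facetOp_ne_zero i J (one_lt_card_iff_nontrivial.mp (by omega))

lemma mem_FO2fin {T : ((Fin k ⊕ Fin k) → F) →ₗ[F] (Fin (k - 1) → F)} :
    T ∈ FO2fin F k ↔ T ∈ FO2 F k := by
  simp [FO2fin, FO2, and_assoc, eq_comm]

lemma card_FO2fin_le (F : Type*) [Field F] (k : ℕ) : #(FO2fin F k) ≤ k * 4 ^ k := by
  classical
  refine (card_image_le.trans (card_filter_le _ _)).trans_eq ?_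
  simp [← mul_pow]

end FacetOperators

section AffineBounded

lemma card_ker_mul_card_range {R M N : Type*} [Semiring R] [AddCommGroup M] [Module R M]
    [AddCommGroup N] [Module R N] (f : M →ₗ[R] N) :
    Nat.card (LinearMap.ker f) * Nat.card (LinearMap.range f) = Nat.card M :=
  AddSubgroup.index_ker f.toAddMonoidHom ▸ AddSubgroup.card_mul_index f.toAddMonoidHom.ker

lemma coe_affineSubspace_mk' {R V : Type*} [Ring R] [AddCommGroup V] [Module R V] (v : V)
    (W : Submodule R V) : (AffineSubspace.mk' v W : Set V) = (fun y => v + y) '' (W : Set V) := by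
  ext z
  simp [AffineSubspace.mem_mk', Set.image_add_left, sub_eq_neg_add]

variable {F : Type*} [Field F] [Fintype F] {ι : Type*} [Fintype ι] {C : ℝ} {S : Set (ι → F)}

lemma AffineBounded.ncard_coset_inter_le (hS : AffineBounded F C S) {W : Submodule F (ι → F)}
    (hW : W ≠ ⊥) (v : ι → F) :
    (((fun y => v + y) '' (W : Set (ι → F)) ∩ S).ncard : ℝ) ≤
      C * Nat.card W * S.ncard / (Fintype.card F : ℝ) ^ Fintype.card ι := by
  have hdim : 1 ≤ Module.finrank F (AffineSubspace.mk' v W).direction := by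
    rwa [AffineSubspace.direction_mk', Submodule.one_le_finrank_iff]
  have hbound := hS _ (AffineSubspace.mk'_nonempty v W) hdim
  rwa [coe_affineSubspace_mk', Nat.card_image_of_injective (add_right_injective v)] at hbound

lemma AffineBounded.card_ker_mul_ncard_le {M : Type*} [AddCommGroup M] [Module F M]
    (hS : AffineBounded F C S) {f : M →ₗ[F] (ι → F)} (hf : f ≠ 0) (v : ι → F) :
    (Nat.card (LinearMap.ker f) : ℝ) *
        ((fun y => v + y) '' (LinearMap.range f : Set (ι → F)) ∩ S).ncard ≤
      C * Nat.card M * S.ncard / (Fintype.card F : ℝ) ^ Fintype.card ι := by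
  have hbound := hS.ncard_coset_inter_le (mt LinearMap.range_eq_bot.mp hf) v
  calc _ ≤ _ := mul_le_mul_of_nonneg_left hbound (Nat.cast_nonneg _)
    _ = C * (Nat.card (LinearMap.ker f) * Nat.card (LinearMap.range f) : ℕ) * S.ncard /
        (Fintype.card F : ℝ) ^ Fintype.card ι := by push_cast; ring
    _ = _ := by rw [card_ker_mul_card_range]

lemma AffineBounded.card_ker_rightPart_mul_ncard_le {k : ℕ} {S : Set (Fin (k - 1) → F)}
    (hS : AffineBounded F C S) {T : ((Fin k ⊕ Fin k) → F) →ₗ[F] (Fin (k - 1) → F)}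
    (hT : T ∈ FO2 F k) (v : Fin (k - 1) → F) :
    (Nat.card (LinearMap.ker (rightPart T)) : ℝ) *
        ((fun y => v + y) '' (LinearMap.range (rightPart T) : Set (Fin (k - 1) → F)) ∩ S).ncard ≤
      C * Fintype.card F * S.ncard := by
  have hk : k ≠ 0 := by
    obtain ⟨i, -⟩ := hT
    exact i.pos.ne'
  have hF : (Fintype.card F : ℝ) ≠ 0 := Nat.cast_ne_zero.mpr Fintype.card_ne_zero
  refine (hS.card_ker_mul_ncard_le (rightPart_ne_zero_of_mem_FO2 hT) v).trans_eq ?_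
  rw [Nat.card_fun, Nat.card_eq_fintype_card, Nat.card_eq_fintype_card, Fintype.card_fin,
    Fintype.card_fin, Nat.cast_pow, ← mul_pow_sub_one hk]
  field_simp

end AffineBounded

theorem stmt_9_general {F : Type*} [Field F] [Fintype F] {k : ℕ} {C : ℝ} (hC : 0 ≤ C)
    {S : Set (Fin (k - 1) → F)} (hS : AffineBounded F C S) (s : Fin k → F) :
    ∑ T ∈ FO2fin F k,
        (Nat.card (LinearMap.ker (rightPart T)) : ℝ) *
          ((fun y => leftPart T s + y) ''
            (LinearMap.range (rightPart T) : Set (Fin (k - 1) → F)) ∩ S).ncard ≤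
      (k * 4 ^ k : ℕ) * C * Fintype.card F * S.ncard := by
  calc _ ≤ #(FO2fin F k) • (C * Fintype.card F * S.ncard) :=
        sum_le_card_nsmul _ _ _ fun T hT =>
          hS.card_ker_rightPart_mul_ncard_le (mem_FO2fin.mp hT) (leftPart T s)
    _ = #(FO2fin F k) * C * Fintype.card F * S.ncard := by rw [nsmul_eq_mul]; ring
    _ ≤ _ := by gcongr; exact card_FO2fin_le F k

/-- if `τ(L)` is `C`-affine-bounded then for every `s ∈ F^k`,
`Σ_{T ∈ FO₂} |ker T₂|·|(T₁ s + im T₂) ∩ τ(L)| ≤ D·C·|F|·|L|`. -/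
theorem stmt_9 (k : ℕ) (hk : 2 ≤ k) :
    ∃ D : ℝ, 0 < D ∧
      ∀ (n m : ℕ) (F : Type) [Field F] [Fintype F],
        ringChar F = 2 → Fintype.card F = 2 ^ m → 2 * n ≤ 2 ^ m → 2 ^ m ≤ 4 * n →
        ∀ τ : Fin n → F, Function.Injective τ → (∀ v, τ v ≠ 0) →
          ∀ C : ℝ, 0 < C →
            ∀ L : Finset (Finset (Fin n)), (∀ f ∈ L, f.card = k - 1) →
              ∀ ordL : Finset (Fin n) → Fin (k - 1) → Fin n,
                (∀ f : Finset (Fin n), f.card = k - 1 →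
                    Finset.image (ordL f) Finset.univ = f) →
              AffineBounded F C ((fun f => τ ∘ ordL f) '' (L : Set (Finset (Fin n)))) →
              ∀ s : Fin k → F,
                ∑ T ∈ FO2fin F k,
                    (Nat.card (LinearMap.ker (rightPart T)) : ℝ) *
                      (Set.ncard
                        ((fun y => leftPart T s + y) ''
                            (LinearMap.range (rightPart T) : Set (Fin (k - 1) → F)) ∩
                          (fun f => τ ∘ ordL f) '' (L : Set (Finset (Fin n)))) : ℝ) ≤
                  D * C * (Fintype.card F : ℝ) * (L.card : ℝ) := by
  refine ⟨(k * 4 ^ k : ℕ), by positivity, ?_⟩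
  intro n m F _ _ _ _ _ _ τ _ _ C hC L _ ordL _ hS s
  refine (stmt_9_general hC.le hS s).trans ?_
  gcongr
  exact (Set.ncard_image_le L.finite_toSet).trans_eq (Set.ncard_coe_finset L)
end
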